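/- arXiv:1712.10327 — 4 statements merged into one kernel-verified Lean document; each statement's English description precedes it below -/
import Mathlib

section
/- Let P be a real polynomial of degree n ≥ 1 all of whose coefficients are non-negative. If P is real-rooted (so all its roots are real, hence non-positive), then the inequality n·P(x)·P''(x) + (1-n)·P'(x)² ≤ 0 holds for every x ∈ ℝ. -/
/-! Build the polynomial up one linear factor at a time. The expression
`L n P = n P P'' + (1 - n) P' ^ 2` satisfies
`n L (n + 1) ((X - a) P) = (n + 1) (X - a) ^ 2 L n P - ((X - a) P' - n P) ^ 2`,
so adjoining a root keeps it non-positive; scaling `P` by `c` multiplies it by `c ^ 2`. -/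

open Polynomial

section CommRing

variable {R : Type*} [CommRing R]

/-- The differential expression whose non-positivity is Laguerre's inequality. The parameter `n`
stands for the degree of `P`; keeping it independent of `P` lets the identities below hold without
any condition on the degree. -/
noncomputable def laguerreForm (n : ℕ) (P : R[X]) : R[X] :=
  n * P * derivative (derivative P) + (1 - n) * derivative P ^ 2

theorem eval_laguerreForm (n : ℕ) (P : R[X]) (x : R) :
    (laguerreForm n P).eval x =
      n * P.eval x * (derivative (derivative P)).eval x
        + (1 - n) * (derivative P).eval x ^ 2 := by
  simp [laguerreForm]

theorem laguerreForm_C_mul (n : ℕ) (c : R) (P : R[X]) :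
    laguerreForm n (C c * P) = C c ^ 2 * laguerreForm n P := by
  simp only [laguerreForm, derivative_C_mul]
  ring

theorem natCast_mul_laguerreForm_succ_X_sub_C_mul (n : ℕ) (a : R) (P : R[X]) :
    (n : R[X]) * laguerreForm (n + 1) ((X - C a) * P) =
      ((n : R[X]) + 1) * (X - C a) ^ 2 * laguerreForm n P
        - ((X - C a) * derivative P - (n : R[X]) * P) ^ 2 := by
  simp only [laguerreForm, derivative_mul, derivative_add, derivative_X_sub_C, one_mul,
    Nat.cast_add, Nat.cast_one]
  ring

end CommRing

section Ordered

variable {R : Type*} [CommRing R] [LinearOrder R] [IsStrictOrderedRing R]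

theorem eval_laguerreForm_succ_X_sub_C_mul_nonpos {n : ℕ} (hn : n ≠ 0) {P : R[X]} {x : R}
    (hP : (laguerreForm n P).eval x ≤ 0) (a : R) :
    (laguerreForm (n + 1) ((X - C a) * P)).eval x ≤ 0 := by
  have hn_pos : (0 : R) < n := Nat.cast_pos.2 hn.bot_lt
  refine nonpos_of_mul_nonpos_right ?_ hn_pos
  calc
    (n : R) * (laguerreForm (n + 1) ((X - C a) * P)).eval x
      = (n + 1) * (x - a) ^ 2 * (laguerreForm n P).eval x
          - ((x - a) * (derivative P).eval x - n * P.eval x) ^ 2 := by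
        simpa using congrArg (eval x) (natCast_mul_laguerreForm_succ_X_sub_C_mul n a P)
    _ ≤ 0 := sub_nonpos_of_le <|
        (mul_nonpos_of_nonneg_of_nonpos (by positivity) hP).trans (sq_nonneg _)

theorem eval_laguerreForm_prod_X_sub_C_nonpos (s : Multiset R) (x : R) :
    (laguerreForm s.card (s.map fun a => X - C a).prod).eval x ≤ 0 := by
  induction s using Multiset.induction_on with
  | empty => simp [laguerreForm]
  | cons a s ih =>
    rcases eq_or_ne s 0 with rfl | hs
    · simp [laguerreForm]
    · simpa only [Multiset.card_cons, Multiset.map_cons, Multiset.prod_cons] using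
        eval_laguerreForm_succ_X_sub_C_mul_nonpos (Multiset.card_eq_zero.not.2 hs) ih a

theorem stmt2_general (P : R[X]) (n : ℕ) (hdeg : P.natDegree = n) (hroots : P.Splits) (x : R) :
    n * P.eval x * (derivative (derivative P)).eval x
      + (1 - n) * (derivative P).eval x ^ 2 ≤ 0 := by
  have hfactor : P = C P.leadingCoeff * (P.roots.map fun a => X - C a).prod :=
    hroots.eq_prod_roots
  have hcard : n = P.roots.card := hdeg.symm.trans hroots.natDegree_eq_card_roots
  rw [← eval_laguerreForm, hfactor, laguerreForm_C_mul, eval_mul, eval_pow, eval_C, hcard]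
  exact mul_nonpos_of_nonneg_of_nonpos (sq_nonneg _)
    (eval_laguerreForm_prod_X_sub_C_nonpos P.roots x)

end Ordered

theorem stmt2 (P : Polynomial ℝ) (n : ℕ) (hn : 1 ≤ n) (hdeg : P.natDegree = n)
    (hcoeff : ∀ k, 0 ≤ P.coeff k)
    (hroots : (P.map (RingHom.id ℝ)).Splits) :
    ∀ x : ℝ, (n : ℝ) * P.eval x * (Polynomial.derivative (Polynomial.derivative P)).eval x
      + (1 - (n : ℝ)) * ((Polynomial.derivative P).eval x) ^ 2 ≤ 0 := by
  rw [Polynomial.map_id] at hroots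
  exact stmt2_general P n hdeg hroots
end

section
/- Let P = a₀ + a₁X + a₂X² + a₃X³ be a real polynomial with a₀, a₁, a₂, a₃ ≥ 0 and a₃ ≠ 0. Then P is real-rooted if and only if 3·P(x)·P''(x) - 2·P'(x)² ≤ 0 for all x ∈ ℝ. -/
/-!
For split `P` of degree at most `n + 1`, Laguerre's inequality `(n + 1) P P'' ≤ n P' ^ 2` follows by
splitting off one linear factor at a time: up to a positive factor, the defect (right side minus
left side) of `(X - r) Q` is a square plus a nonnegative multiple of the defect of `Q`. Conversely,
the defect of a cubic is a quadratic polynomial whose discriminant is `-12` times that of the cubic,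
so if the defect is nonnegative everywhere then the cubic has nonnegative discriminant. Over a real
closed field, a cubic has a root `r`, and its discriminant is that of the quadratic cofactor `Q`
times `Q(r) ^ 2`. Hence `Q` has nonnegative discriminant, which is immediate if `Q(r) = 0`, and
splits.
-/

open Polynomial

section CommRing

variable {R : Type*} [CommRing R]

/-- The Laguerre defect `n P' ^ 2 - (n + 1) P P''` of `P`, regarded as a polynomial of degree at
most `n + 1`; the index is shifted to avoid truncated subtraction. Laguerre's inequality says that
it is nonnegative when `P` splits. -/
noncomputable def laguerreDefect (n : ℕ) (P : R[X]) : R[X] :=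
  n * derivative P ^ 2 - (n + 1) * (P * derivative (derivative P))

theorem laguerreDefect_X_sub_C_mul (n : ℕ) (r : R) (Q : R[X]) :
    (n + 1 : R[X]) * laguerreDefect (n + 1) ((X - C r) * Q) =
      ((n + 1 : R[X]) * Q - (X - C r) * derivative Q) ^ 2 +
        (n + 2 : R[X]) * (X - C r) ^ 2 * laguerreDefect n Q := by
  simp only [laguerreDefect, derivative_mul, derivative_sub, derivative_X, derivative_C,
    derivative_add, sub_zero, one_mul, Nat.cast_add, Nat.cast_one]
  ring

theorem laguerreDefect_toPoly (P : Cubic R) :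
    laguerreDefect 2 P.toPoly =
      C (2 * (P.b ^ 2 - 3 * P.a * P.c)) * X ^ 2 + C (2 * (P.b * P.c - 9 * P.a * P.d)) * X +
        C (2 * (P.c ^ 2 - 3 * P.b * P.d)) := by
  simp only [laguerreDefect, Nat.cast_ofNat, Cubic.toPoly, derivative_mul, derivative_C, zero_mul,
    derivative_X_pow_succ, map_add, C_ofNat, map_one, zero_add, Nat.cast_one, pow_one,
    derivative_X, mul_one, add_zero, derivative_ofNat, derivative_one, map_mul, map_sub, map_pow]
  ring

theorem discrim_laguerreDefect_toPoly (P : Cubic R) :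
    discrim (2 * (P.b ^ 2 - 3 * P.a * P.c)) (2 * (P.b * P.c - 9 * P.a * P.d))
      (2 * (P.c ^ 2 - 3 * P.b * P.d)) = -12 * P.discr := by
  rw [discrim, Cubic.discr]
  ring

theorem d_eq_of_isRoot_toPoly {P : Cubic R} {r : R} (hr : P.toPoly.IsRoot r) :
    P.d = -(P.a * r ^ 3 + P.b * r ^ 2 + P.c * r) := by
  simp only [IsRoot.def, Cubic.toPoly, eval_add, eval_mul, eval_C, eval_pow, eval_X] at hr
  linear_combination hr

theorem toPoly_eq_X_sub_C_mul_of_isRoot {P : Cubic R} {r : R} (hr : P.toPoly.IsRoot r) :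
    P.toPoly = (X - C r) *
      (C P.a * X ^ 2 + C (P.a * r + P.b) * X + C (P.a * r ^ 2 + P.b * r + P.c)) := by
  rw [Cubic.toPoly, d_eq_of_isRoot_toPoly hr]
  simp only [C_neg, C_add, C_mul, C_pow]
  ring

theorem discr_eq_discrim_mul_sq_of_isRoot {P : Cubic R} {r : R} (hr : P.toPoly.IsRoot r) :
    P.discr = discrim P.a (P.a * r + P.b) (P.a * r ^ 2 + P.b * r + P.c) *
      (P.a * (r * r) + (P.a * r + P.b) * r + (P.a * r ^ 2 + P.b * r + P.c)) ^ 2 := by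
  rw [Cubic.discr, discrim, d_eq_of_isRoot_toPoly hr]
  ring

end CommRing

section LinearOrderedField

variable {K : Type*} [Field K] [LinearOrder K] [IsStrictOrderedRing K]

theorem laguerreDefect_eval_nonneg_of_splits {n : ℕ} {P : K[X]} (hP : P.Splits)
    (hdeg : P.natDegree ≤ n + 1) (x : K) : 0 ≤ (laguerreDefect n P).eval x := by
  induction n generalizing P with
  | zero =>
    have derivative_derivative_eq_zero : derivative (derivative P) = 0 :=
      derivative_of_natDegree_zero (by have := natDegree_derivative_le P; omega)
    simp [laguerreDefect, derivative_derivative_eq_zero]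
  | succ n ih =>
    by_cases hconst : P.natDegree = 0
    · simp [laguerreDefect, derivative_of_natDegree_zero hconst]
    obtain ⟨r, hr⟩ := hP.exists_eval_eq_zero (degree_ne_of_natDegree_ne hconst)
    obtain ⟨Q, rfl⟩ := dvd_iff_isRoot.2 hr
    have hQ₀ : Q ≠ 0 := by
      rintro rfl
      simp at hconst
    have hQ : Q.Splits := hP.of_dvd (mul_ne_zero (X_sub_C_ne_zero r) hQ₀) (dvd_mul_left _ _)
    rw [natDegree_mul (X_sub_C_ne_zero r) hQ₀, natDegree_X_sub_C] at hdeg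
    have ihQ : 0 ≤ (laguerreDefect n Q).eval x := ih hQ (by omega)
    have defect_eq := congrArg (eval x) (laguerreDefect_X_sub_C_mul n r Q)
    simp only [eval_add, eval_sub, eval_mul, eval_pow, eval_X, eval_C, eval_natCast, eval_one,
      eval_ofNat] at defect_eq
    refine nonneg_of_mul_nonneg_right ?_ (by positivity : (0 : K) < n + 1)
    exact defect_eq ▸ by positivity

theorem discr_nonneg_of_laguerreDefect_nonneg {P : Cubic K}
    (h : ∀ x, 0 ≤ (laguerreDefect 2 P.toPoly).eval x) : 0 ≤ P.discr := by
  have discrim_le : discrim (2 * (P.b ^ 2 - 3 * P.a * P.c)) (2 * (P.b * P.c - 9 * P.a * P.d))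
      (2 * (P.c ^ 2 - 3 * P.b * P.d)) ≤ 0 :=
    discrim_le_zero fun x ↦ by simpa [laguerreDefect_toPoly, ← sq] using h x
  rw [discrim_laguerreDefect_toPoly] at discrim_le
  linarith

theorem discrim_nonneg_of_discrim_mul_sq_nonneg {a b c x : K}
    (h : 0 ≤ discrim a b c * (a * (x * x) + b * x + c) ^ 2) : 0 ≤ discrim a b c := by
  by_cases hx : a * (x * x) + b * x + c = 0
  · rw [discrim_eq_sq_of_quadratic_eq_zero hx]
    positivity
  · exact nonneg_of_mul_nonneg_left h (by positivity)

end LinearOrderedField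

section IsRealClosed

variable {K : Type*} [Field K] [LinearOrder K] [IsStrictOrderedRing K] [IsRealClosed K]

theorem splits_quadratic_of_discrim_nonneg {a b c : K} (h : 0 ≤ discrim a b c) :
    (C a * X ^ 2 + C b * X + C c).Splits := by
  by_cases ha : a = 0
  · rw [ha, C_0, zero_mul, zero_add]
    exact .of_natDegree_le_one natDegree_linear_le
  · obtain ⟨x, hx⟩ := exists_quadratic_eq_zero ha (IsRealClosed.nonneg_iff_isSquare.1 h)
    exact .of_natDegree_eq_two (natDegree_quadratic ha) (x := x) (by simpa [sq] using hx)

theorem splits_toPoly_of_discr_nonneg {P : Cubic K} (h : 0 ≤ P.discr) : P.toPoly.Splits := by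
  by_cases ha : P.a = 0
  · by_cases hb : P.b = 0
    · exact .of_degree_le_one (Cubic.degree_of_b_eq_zero ha hb)
    · have discr_eq : P.discr = P.b ^ 2 * discrim P.b P.c P.d := by
        rw [Cubic.discr, discrim, ha]
        ring
      rw [Cubic.of_a_eq_zero ha]
      rw [discr_eq] at h
      exact splits_quadratic_of_discrim_nonneg (nonneg_of_mul_nonneg_right h (by positivity))
  · have odd_natDegree : Odd P.toPoly.natDegree := by
      rw [Cubic.natDegree_of_a_ne_zero ha]
      decide
    obtain ⟨r, hr⟩ := IsRealClosed.exists_isRoot_of_odd_natDegree odd_natDegree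
    rw [discr_eq_discrim_mul_sq_of_isRoot hr] at h
    rw [toPoly_eq_X_sub_C_mul_of_isRoot hr]
    exact (Splits.X_sub_C r).mul
      (splits_quadratic_of_discrim_nonneg (discrim_nonneg_of_discrim_mul_sq_nonneg h))

theorem stmt6_general {P : K[X]} (hP : P.natDegree ≤ 3) :
    P.Splits ↔ ∀ x : K, 3 * P.eval x * (derivative (derivative P)).eval x
      - 2 * (derivative P).eval x ^ 2 ≤ 0 := by
  have laguerreDefect_nonneg_iff (x : K) : 0 ≤ (laguerreDefect 2 P).eval x ↔
      3 * P.eval x * (derivative (derivative P)).eval x - 2 * (derivative P).eval x ^ 2 ≤ 0 := by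
    have two_add_one : (2 + 1 : K) = 3 := by norm_num
    simp [laguerreDefect, mul_assoc, two_add_one]
  simp only [← laguerreDefect_nonneg_iff]
  refine ⟨fun hs ↦ laguerreDefect_eval_nonneg_of_splits hs hP, fun h ↦ ?_⟩
  obtain ⟨Q, hQ⟩ := Cubic.equiv.surjective ⟨P, natDegree_le_iff_degree_le.1 hP⟩
  obtain rfl : Q.toPoly = P := congrArg Subtype.val hQ
  exact splits_toPoly_of_discr_nonneg (discr_nonneg_of_laguerreDefect_nonneg h)

end IsRealClosed

theorem exists_isRoot_of_odd_natDegree_real {P : ℝ[X]} (hP : Odd P.natDegree) :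
    ∃ x, P.IsRoot x := by
  have leadingCoeff_nonpos : (P * P.comp (-X)).leadingCoeff ≤ 0 := by
    rw [leadingCoeff_mul, comp_neg_X_leadingCoeff_eq, hP.neg_one_pow]
    linarith [mul_self_nonneg P.leadingCoeff]
  have degree_pos : 0 < (P * P.comp (-X)).degree := by
    have degree_P_pos : 0 < P.degree := natDegree_pos_iff_degree_pos.1 hP.pos
    rw [degree_mul, degree_comp_neg_X]
    exact degree_P_pos.trans_le (le_add_of_nonneg_right degree_P_pos.le)
  obtain ⟨x, hx⟩ := ((tendsto_atBot_of_leadingCoeff_nonpos _ degree_pos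
    leadingCoeff_nonpos).eventually_le_atBot 0).exists
  have opposite_signs : P.eval x * P.eval (-x) ≤ 0 := by simpa using hx
  rcases mul_nonpos_iff.1 opposite_signs with ⟨hpos, hneg⟩ | ⟨hneg, hpos⟩
  · exact mem_range_of_exists_le_of_exists_ge P.continuous ⟨_, hneg⟩ ⟨_, hpos⟩
  · exact mem_range_of_exists_le_of_exists_ge P.continuous ⟨_, hneg⟩ ⟨_, hpos⟩

instance instIsRealClosedReal : IsRealClosed ℝ :=
  .of_linearOrderedField Real.isSquare_iff.2 exists_isRoot_of_odd_natDegree_real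

open Polynomial in
theorem stmt6 (a₀ a₁ a₂ a₃ : ℝ) (h₀ : 0 ≤ a₀) (h₁ : 0 ≤ a₁) (h₂ : 0 ≤ a₂) (h₃ : 0 ≤ a₃)
    (ha₃ : a₃ ≠ 0)
    (P : Polynomial ℝ) (hP : P = C a₀ + C a₁ * X + C a₂ * X ^ 2 + C a₃ * X ^ 3) :
    (P.map (RingHom.id ℝ)).Splits ↔
      ∀ x : ℝ, 3 * P.eval x * (derivative (derivative P)).eval x
        - 2 * ((derivative P).eval x) ^ 2 ≤ 0 := by
  rw [map_id]
  exact stmt6_general (hP ▸ by compute_degree)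
end

section
/- Let n ≥ 2 and let a₀, a₁, a₂ ≥ 0. Set f(x) = a₀ + a₁σ₁(x) + a₂σ₂(x) for x ∈ (0, ∞)ⁿ, where σ₁, σ₂ are the first and second elementary symmetric polynomials in n variables. Then √f is concave on (0, ∞)ⁿ if and only if n·a₁² - 2(n-1)·a₀a₂ ≥ 0, equivalently if and only if the polynomial a₀·C(n,0) + a₁·C(n,1)·X + a₂·C(n,2)·X² is real-rooted. -/
/-- The `k`-th elementary symmetric polynomial in `n` real variables. -/
noncomputable def esymm (n k : ℕ) (x : Fin n → ℝ) : ℝ :=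
  ∑ s ∈ Finset.powersetCard k (Finset.univ : Finset (Fin n)), ∏ i ∈ s, x i

/-! Let `f = a₀ + a₁ σ₁ + a₂ σ₂`, let `x̄` be the mean of `x`, and let
`p(t) = a₀ C(n,0) + a₁ C(n,1) t + a₂ C(n,2) t²`. Then `f(x) = p(x̄) - (a₂ / 2) ‖x - x̄ • 1‖²`.
If `p` is real-rooted, its nonnegative coefficients let it factor as `(α t + β) (γ t + δ)` with
`α, β, γ, δ ≥ 0`, so `√f = √(u v - w²)` with `u`, `v` affine and `w` a seminorm, and this is concave
because `√det` is superadditive on positive semidefinite `2 × 2` matrices. Conversely, `f` restricts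
to `p` on the diagonal, and midpoint concavity of `√p` already forces `0 ≤ discrim p`.
-/

open scoped BigOperators

section SqrtMulSubSq

theorem two_mul_mul_add_sqrt_mul_sqrt_le_add {u v w u' v' w' : ℝ} (hu : 0 ≤ u) (hv : 0 ≤ v)
    (hu' : 0 ≤ u') (hv' : 0 ≤ v') (hw : w ^ 2 ≤ u * v) (hw' : w' ^ 2 ≤ u' * v') :
    2 * (w * w' + √(u * v - w ^ 2) * √(u' * v' - w' ^ 2)) ≤ u * v' + u' * v := by
  set d := √(u * v - w ^ 2)
  set d' := √(u' * v' - w' ^ 2)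
  have hd : d ^ 2 = u * v - w ^ 2 := Real.sq_sqrt (sub_nonneg.mpr hw)
  have hd' : d' ^ 2 = u' * v' - w' ^ 2 := Real.sq_sqrt (sub_nonneg.mpr hw')
  have cauchy_schwarz : (w * w' + d * d') ^ 2 ≤ (u * v') * (u' * v) := by
    calc (w * w' + d * d') ^ 2 ≤ (w ^ 2 + d ^ 2) * (w' ^ 2 + d' ^ 2) := by
          linarith [sq_nonneg (w * d' - d * w')]
      _ = (u * v') * (u' * v) := by rw [hd, hd']; ring
  have am_gm : 4 * (u * v') * (u' * v) ≤ (u * v' + u' * v) ^ 2 := four_mul_le_sq_add _ _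
  refine (abs_le_of_sq_le_sq' ?_ (by positivity)).2
  linarith

-- Minkowski's determinant inequality for the positive semidefinite matrices `!![u, w; w, v]`.
theorem sqrt_mul_sub_sq_add_le {u v w u' v' w' : ℝ} (hu : 0 ≤ u) (hv : 0 ≤ v)
    (hu' : 0 ≤ u') (hv' : 0 ≤ v') (hw : w ^ 2 ≤ u * v) (hw' : w' ^ 2 ≤ u' * v') :
    √(u * v - w ^ 2) + √(u' * v' - w' ^ 2) ≤ √((u + u') * (v + v') - (w + w') ^ 2) := by
  refine Real.le_sqrt_of_sq_le ?_
  rw [add_sq, Real.sq_sqrt (sub_nonneg.mpr hw), Real.sq_sqrt (sub_nonneg.mpr hw')]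
  linarith [two_mul_mul_add_sqrt_mul_sqrt_le_add hu hv hu' hv' hw hw']

theorem concaveOn_sqrt_mul_sub_sq {E : Type*} [AddCommGroup E] [Module ℝ E] {s : Set E}
    {u v w : E → ℝ} (hu : ConcaveOn ℝ s u) (hv : ConcaveOn ℝ s v) (hw : ConvexOn ℝ s w)
    (hu₀ : ∀ x ∈ s, 0 ≤ u x) (hv₀ : ∀ x ∈ s, 0 ≤ v x) (hw₀ : ∀ x ∈ s, 0 ≤ w x)
    (hle : ∀ x ∈ s, w x ^ 2 ≤ u x * v x) :
    ConcaveOn ℝ s fun x => √(u x * v x - w x ^ 2) := by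
  refine ⟨hu.1, fun x hx y hy a b ha hb hab => ?_⟩
  have scale {c : ℝ} (hc : 0 ≤ c) (z : E) :
      c * √(u z * v z - w z ^ 2) = √(c * u z * (c * v z) - (c * w z) ^ 2) := by
    rw [show c * u z * (c * v z) - (c * w z) ^ 2 = c ^ 2 * (u z * v z - w z ^ 2) by ring,
      Real.sqrt_mul (sq_nonneg c), Real.sqrt_sq hc]
  have scale_le {c : ℝ} {z : E} (hz : z ∈ s) : (c * w z) ^ 2 ≤ c * u z * (c * v z) := by
    linarith [mul_le_mul_of_nonneg_left (hle z hz) (sq_nonneg c)]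
  have hux := mul_nonneg ha (hu₀ x hx)
  have hvx := mul_nonneg ha (hv₀ x hx)
  have huy := mul_nonneg hb (hu₀ y hy)
  have hvy := mul_nonneg hb (hv₀ y hy)
  have hz : a • x + b • y ∈ s := hu.1 hx hy ha hb hab
  simp only [smul_eq_mul]
  calc a * √(u x * v x - w x ^ 2) + b * √(u y * v y - w y ^ 2)
      ≤ √((a * u x + b * u y) * (a * v x + b * v y) - (a * w x + b * w y) ^ 2) := by
        rw [scale ha, scale hb]
        exact sqrt_mul_sub_sq_add_le hux hvx huy hvy (scale_le hx) (scale_le hy)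
    _ ≤ √(u (a • x + b • y) * v (a • x + b • y) - w (a • x + b • y) ^ 2) := by
        gcongr
        · exact hu₀ _ hz
        · exact hu.2 hx hy ha hb hab
        · exact hv.2 hx hy ha hb hab
        · exact hw₀ _ hz
        · exact hw.2 hx hy ha hb hab

end SqrtMulSubSq

section Quadratic

theorem discrim_nonneg_of_concaveOn_sqrt {s : Set ℝ} (hs : s.Nontrivial) {a b c : ℝ}
    (hnonneg : ∀ t ∈ s, 0 ≤ a * t ^ 2 + b * t + c)
    (hconc : ConcaveOn ℝ s fun t => √(a * t ^ 2 + b * t + c)) :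
    0 ≤ discrim a b c := by
  obtain ⟨x, hx, y, hy, hxy⟩ := hs
  have hmem : (1 / 2 : ℝ) • x + (1 / 2 : ℝ) • y ∈ s :=
    hconc.1 hx hy one_half_pos.le one_half_pos.le (add_halves 1)
  have midpoint_le := hconc.2 hx hy one_half_pos.le one_half_pos.le (add_halves 1)
  have hpx := hnonneg x hx
  have hpy := hnonneg y hy
  have hpm := hnonneg _ hmem
  simp only [smul_eq_mul] at midpoint_le hpm
  set p := a * x ^ 2 + b * x + c with hp
  set q := a * y ^ 2 + b * y + c with hq
  set m := a * (1 / 2 * x + 1 / 2 * y) ^ 2 + b * (1 / 2 * x + 1 / 2 * y) + c with hm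
  have two_mul_sqrt_mul_sqrt_le : 2 * (√p * √q) ≤ 4 * m - p - q := by
    have h := pow_le_pow_left₀ (by positivity) midpoint_le 2
    rw [Real.sq_sqrt hpm] at h
    linarith [Real.sq_sqrt hpx, Real.sq_sqrt hpy]
  have four_mul_mul_le : 4 * (p * q) ≤ (4 * m - p - q) ^ 2 := by
    calc 4 * (p * q) = (2 * (√p * √q)) ^ 2 := by
          rw [mul_pow, mul_pow, Real.sq_sqrt hpx, Real.sq_sqrt hpy]; ring
      _ ≤ (4 * m - p - q) ^ 2 := pow_le_pow_left₀ (by positivity) two_mul_sqrt_mul_sqrt_le 2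
  have discrim_mul_sq : discrim a b c * (x - y) ^ 2 = (4 * m - p - q) ^ 2 - 4 * (p * q) := by
    rw [hp, hq, hm, discrim]; ring
  refine nonneg_of_mul_nonneg_left ?_ (sq_pos_of_ne_zero (sub_ne_zero.mpr hxy))
  rw [discrim_mul_sq]
  exact sub_nonneg.mpr four_mul_mul_le

theorem exists_nonneg_factorization_of_discrim_nonneg {a b c : ℝ} (ha : 0 ≤ a) (hb : 0 ≤ b)
    (hc : 0 ≤ c) (h : 0 ≤ discrim a b c) :
    ∃ α β γ δ : ℝ, 0 ≤ α ∧ 0 ≤ β ∧ 0 ≤ γ ∧ 0 ≤ δ ∧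
      ∀ t, a * t ^ 2 + b * t + c = (α * t + β) * (γ * t + δ) := by
  rcases ha.eq_or_lt with rfl | ha
  · exact ⟨b, c, 0, 1, hb, hc, le_rfl, zero_le_one, fun t => by ring⟩
  set r := √(discrim a b c)
  have hr : r ^ 2 = b ^ 2 - 4 * a * c := Real.sq_sqrt h
  have hrb : r ≤ b := Real.sqrt_le_iff.mpr ⟨hb, by rw [discrim]; linarith [mul_nonneg ha.le hc]⟩
  -- From `4 a (a t² + b t + c) = (2 a t + b - r) (2 a t + b + r)`.
  refine ⟨1 / 2, (b - r) / (4 * a), 2 * a, b + r, by positivity,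
    div_nonneg (sub_nonneg.mpr hrb) (by positivity), by positivity, by positivity, fun t => ?_⟩
  field_simp
  linear_combination 2 * hr

theorem discrim_binomial {K : Type*} [Field K] [CharZero K] (n : ℕ) (a₀ a₁ a₂ : K) :
    discrim (a₂ * n.choose 2) (a₁ * n.choose 1) (a₀ * n.choose 0) =
      n * (n * a₁ ^ 2 - 2 * (n - 1) * a₀ * a₂) := by
  rw [discrim, Nat.cast_choose_two, Nat.choose_one_right, Nat.choose_zero_right]
  push_cast
  ring

open Polynomial in
theorem splits_quadratic_iff_isSquare_discrim {K : Type*} [Field K] [NeZero (2 : K)] {a b c : K} :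
    (C c + C b * X + C a * X ^ 2).Splits ↔ IsSquare (discrim a b c) := by
  have hp : C c + C b * X + C a * X ^ 2 = C a * X ^ 2 + C b * X + C c := by ring
  rw [hp]
  rcases eq_or_ne a 0 with rfl | ha
  · refine iff_of_true (.of_natDegree_le_one ?_) ⟨b, by simp [discrim, pow_two]⟩
    simpa using natDegree_linear_le (a := b) (b := c)
  have hdeg : (C a * X ^ 2 + C b * X + C c).degree = 2 := degree_quadratic ha
  have heval (r : K) : (C a * X ^ 2 + C b * X + C c).eval r = a * (r * r) + b * r + c := by
    simp [pow_two]
  constructor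
  · intro h
    obtain ⟨r, hr⟩ := h.exists_eval_eq_zero (by simp [hdeg])
    rw [discrim_eq_sq_of_quadratic_eq_zero ((heval r).symm.trans hr)]
    exact IsSquare.sq _
  · intro h
    obtain ⟨r, hr⟩ := exists_quadratic_eq_zero ha h
    exact .of_degree_eq_two hdeg ((heval r).trans hr)

end Quadratic

section Mean

variable {ι : Type*} [Fintype ι]

variable (ι) in
/-- The arithmetic mean as a linear functional, so that it can be composed with convex functions.
It is `0` on an empty index type. -/
noncomputable def mean : (ι → ℝ) →ₗ[ℝ] ℝ where
  toFun x := 𝔼 i, x i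
  map_add' x y := Finset.expect_add_distrib _ x y
  map_smul' c x := (Finset.smul_expect c _ x).symm

variable (ι) in
/-- The deviation of a vector from its mean, `x ↦ x - x̄ • 1`. It takes values in `EuclideanSpace`
so that `‖centering ι x‖ ^ 2` is the sum of squared deviations. -/
noncomputable def centering : (ι → ℝ) →ₗ[ℝ] EuclideanSpace ℝ ι where
  toFun x := WithLp.toLp 2 (Fintype.balance x)
  map_add' x y := by simp
  map_smul' c x := by ext; simp [Fintype.balance_apply, mul_sub, Finset.mul_expect]

theorem card_mul_mean (x : ι → ℝ) : Fintype.card ι * mean ι x = ∑ i, x i :=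
  Fintype.card_mul_expect x

theorem norm_sq_centering (x : ι → ℝ) :
    ‖centering ι x‖ ^ 2 = ∑ i, x i ^ 2 - Fintype.card ι * mean ι x ^ 2 := by
  have hcoord (i : ι) : centering ι x i = x i - mean ι x := rfl
  simp only [EuclideanSpace.real_norm_sq_eq, hcoord, sub_sq, Finset.sum_add_distrib,
    Finset.sum_sub_distrib, ← Finset.sum_mul, ← Finset.mul_sum, ← card_mul_mean,
    Finset.sum_const, Finset.card_univ, nsmul_eq_mul]
  ring

theorem two_mul_sum_powersetCard_two {R : Type*} [CommRing R] (x : ι → R) :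
    2 * ∑ t ∈ Finset.powersetCard 2 Finset.univ, ∏ i ∈ t, x i =
      (∑ i, x i) ^ 2 - ∑ i, x i ^ 2 := by
  have newton := congrArg (MvPolynomial.eval x) (MvPolynomial.mul_esymm_eq_sum ι R 2)
  have filter_antidiagonal :
      {a ∈ Finset.HasAntidiagonal.antidiagonal 2 | a.1 < 2} = {(0, 2), (1, 1)} := by
    decide
  rw [filter_antidiagonal] at newton
  have eval_newton : 2 * ∑ t ∈ Finset.powersetCard 2 Finset.univ, ∏ i ∈ t, x i =
      (-1) ^ 3 * (∑ i, x i ^ 2 + -((∑ i, x i) * ∑ i, x i)) := by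
    simpa [MvPolynomial.esymm, MvPolynomial.psum, Finset.powersetCard_one] using newton
  rw [eval_newton]
  ring

end Mean

theorem convex_forall_pos {ι : Type*} : Convex ℝ {x : ι → ℝ | ∀ i, 0 < x i} := by
  simpa [Set.pi] using convex_pi (s := Set.univ) fun (_ : ι) _ => convex_Ioi (0 : ℝ)

section Esymm

variable {n : ℕ}

theorem esymm_nonneg (k : ℕ) {x : Fin n → ℝ} (hx : ∀ i, 0 ≤ x i) : 0 ≤ esymm n k x :=
  Finset.sum_nonneg fun _ _ => Finset.prod_nonneg fun i _ => hx i

theorem esymm_one_eq_choose_mul_mean (x : Fin n → ℝ) :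
    esymm n 1 x = n.choose 1 * mean (Fin n) x := by
  have h := card_mul_mean x
  rw [Fintype.card_fin] at h
  simp [esymm, Finset.powersetCard_one, h]

theorem esymm_two_eq_choose_mul_mean_sq_sub (x : Fin n → ℝ) :
    esymm n 2 x = n.choose 2 * mean (Fin n) x ^ 2 - ‖centering (Fin n) x‖ ^ 2 / 2 := by
  have h := two_mul_sum_powersetCard_two x
  rw [← card_mul_mean, Fintype.card_fin] at h
  rw [norm_sq_centering, Fintype.card_fin, Nat.cast_choose_two, esymm]
  linear_combination h / 2

theorem esymm_const (k : ℕ) (t : ℝ) : esymm n k (fun _ => t) = n.choose k * t ^ k := by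
  rw [esymm, Finset.sum_congr rfl fun s hs => by
    rw [Finset.prod_const, (Finset.mem_powersetCard.mp hs).2]]
  simp

variable {a₀ a₁ a₂ : ℝ}

theorem esymm_combination_eq_quadratic_mean_sub (x : Fin n → ℝ) :
    a₀ + a₁ * esymm n 1 x + a₂ * esymm n 2 x =
      a₂ * n.choose 2 * mean (Fin n) x ^ 2 + a₁ * n.choose 1 * mean (Fin n) x + a₀ * n.choose 0
        - a₂ / 2 * ‖centering (Fin n) x‖ ^ 2 := by
  rw [esymm_one_eq_choose_mul_mean, esymm_two_eq_choose_mul_mean_sq_sub, Nat.choose_zero_right]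
  push_cast
  ring

theorem concaveOn_sqrt_esymm_combination (h₀ : 0 ≤ a₀) (h₁ : 0 ≤ a₁) (h₂ : 0 ≤ a₂)
    (h : 0 ≤ discrim (a₂ * n.choose 2) (a₁ * n.choose 1) (a₀ * n.choose 0)) :
    ConcaveOn ℝ {x : Fin n → ℝ | ∀ i, 0 < x i}
      fun x => √(a₀ + a₁ * esymm n 1 x + a₂ * esymm n 2 x) := by
  obtain ⟨α, β, γ, δ, hα, hβ, hγ, hδ, hfactor⟩ :=
    exists_nonneg_factorization_of_discrim_nonneg (by positivity) (by positivity)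
      (by positivity) h
  have hS := convex_forall_pos (ι := Fin n)
  have hmean (x : Fin n → ℝ) (hx : ∀ i, 0 < x i) : 0 ≤ mean (Fin n) x :=
    Finset.expect_nonneg fun i _ => (hx i).le
  have hf (x : Fin n → ℝ) : a₀ + a₁ * esymm n 1 x + a₂ * esymm n 2 x =
      (α * mean (Fin n) x + β) * (γ * mean (Fin n) x + δ)
        - (√(a₂ / 2) * ‖centering (Fin n) x‖) ^ 2 := by
    rw [esymm_combination_eq_quadratic_mean_sub, hfactor, mul_pow, Real.sq_sqrt (by positivity)]
  simp only [hf]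
  refine concaveOn_sqrt_mul_sub_sq (((α • mean (Fin n)).concaveOn hS).add_const β)
    (((γ • mean (Fin n)).concaveOn hS).add_const δ)
    (((convexOn_univ_norm.comp_linearMap (centering (Fin n))).subset (Set.subset_univ _) hS).smul
      (Real.sqrt_nonneg _))
    (fun x hx => add_nonneg (mul_nonneg hα (hmean x hx)) hβ)
    (fun x hx => add_nonneg (mul_nonneg hγ (hmean x hx)) hδ)
    (fun x _ => by positivity) (fun x hx => ?_)
  have hσ₁ := esymm_nonneg 1 fun i => (hx i).le
  have hσ₂ := esymm_nonneg 2 fun i => (hx i).le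
  rw [← sub_nonneg, ← hf]
  positivity

theorem discrim_nonneg_of_concaveOn_sqrt_esymm_combination
    (h₀ : 0 ≤ a₀) (h₁ : 0 ≤ a₁) (h₂ : 0 ≤ a₂)
    (h : ConcaveOn ℝ {x : Fin n → ℝ | ∀ i, 0 < x i}
      fun x => √(a₀ + a₁ * esymm n 1 x + a₂ * esymm n 2 x)) :
    0 ≤ discrim (a₂ * n.choose 2) (a₁ * n.choose 1) (a₀ * n.choose 0) := by
  have hdiag (t : ℝ) : a₀ + a₁ * esymm n 1 (fun _ => t) + a₂ * esymm n 2 (fun _ => t) =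
      a₂ * n.choose 2 * t ^ 2 + a₁ * n.choose 1 * t + a₀ * n.choose 0 := by
    simp only [esymm_const, Nat.choose_zero_right, Nat.cast_one]
    ring
  have hconc : ConcaveOn ℝ (Set.Ioi 0) fun t : ℝ =>
      √(a₂ * n.choose 2 * t ^ 2 + a₁ * n.choose 1 * t + a₀ * n.choose 0) := by
    simp only [← hdiag]
    exact (h.comp_linearMap LinearMap.const).subset (fun t ht _ => ht) (convex_Ioi 0)
  refine discrim_nonneg_of_concaveOn_sqrt (Set.Ioi_infinite 0).nontrivial
    (fun t (ht : 0 < t) => ?_) hconc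
  positivity

theorem concaveOn_sqrt_esymm_combination_iff (h₀ : 0 ≤ a₀) (h₁ : 0 ≤ a₁) (h₂ : 0 ≤ a₂) :
    ConcaveOn ℝ {x : Fin n → ℝ | ∀ i, 0 < x i}
        (fun x => √(a₀ + a₁ * esymm n 1 x + a₂ * esymm n 2 x)) ↔
      0 ≤ discrim (a₂ * n.choose 2) (a₁ * n.choose 1) (a₀ * n.choose 0) :=
  ⟨discrim_nonneg_of_concaveOn_sqrt_esymm_combination h₀ h₁ h₂,
    concaveOn_sqrt_esymm_combination h₀ h₁ h₂⟩

end Esymm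

open Polynomial in
theorem stmt8 (n : ℕ) (hn : 2 ≤ n) (a₀ a₁ a₂ : ℝ) (h₀ : 0 ≤ a₀) (h₁ : 0 ≤ a₁) (h₂ : 0 ≤ a₂) :
    (ConcaveOn ℝ {x : Fin n → ℝ | ∀ i, 0 < x i}
        (fun x => Real.sqrt (a₀ + a₁ * esymm n 1 x + a₂ * esymm n 2 x)) ↔
      0 ≤ (n : ℝ) * a₁ ^ 2 - 2 * ((n : ℝ) - 1) * a₀ * a₂)
    ∧ (ConcaveOn ℝ {x : Fin n → ℝ | ∀ i, 0 < x i}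
        (fun x => Real.sqrt (a₀ + a₁ * esymm n 1 x + a₂ * esymm n 2 x)) ↔
      (C (a₀ * (n.choose 0 : ℝ)) + C (a₁ * (n.choose 1 : ℝ)) * X
        + C (a₂ * (n.choose 2 : ℝ)) * X ^ 2).Splits) := by
  have hn₀ : (0 : ℝ) < n := by positivity
  have concave_iff_discrim := concaveOn_sqrt_esymm_combination_iff (n := n) h₀ h₁ h₂
  refine ⟨?_, ?_⟩
  · rw [concave_iff_discrim, discrim_binomial, mul_nonneg_iff_of_pos_left hn₀]
  · rw [concave_iff_discrim, splits_quadratic_iff_isSquare_discrim, Real.isSquare_iff]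
end

section
/- Let n ≥ 1 and 0 ≤ k ≤ n. For every x ∈ ℝⁿ, the univariate polynomial X ↦ σ_k(x₁ + X, …, xₙ + X), of degree k, is real-rooted (all its complex roots are real). In other words, each elementary symmetric polynomial σ_k is hyperbolic in the direction 𝟙 = (1,…,1). -/
open Polynomial

/-- The univariate polynomial `σ_k(x₁ + X, …, xₙ + X)` obtained by substituting
`xᵢ + X` for the `i`-th variable in the `k`-th elementary symmetric polynomial. -/
noncomputable def esymmPoly (n k : ℕ) (x : Fin n → ℝ) : Polynomial ℝ :=
  ∑ s ∈ Finset.powersetCard k (Finset.univ : Finset (Fin n)), ∏ i ∈ s, (X + C (x i))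

/-!
Expanding `∏ᵢ (Y + X + xᵢ)` in powers of `Y` in two ways, by Vieta and by Taylor, identifies
`σ_k(x₁ + X, …, xₙ + X)` with the Hasse derivative of order `n - k` of `∏ᵢ (X + xᵢ)`. By Rolle's
theorem, differentiation preserves real-rootedness.
-/

theorem hasseDeriv_map {R S : Type*} [Semiring R] [Semiring S] (f : R →+* S) (p : R[X]) (m : ℕ) :
    hasseDeriv m (p.map f) = (hasseDeriv m p).map f := by
  ext i
  simp only [hasseDeriv_coeff, coeff_map, map_mul, map_natCast]

theorem coeff_taylor_X_map_C {R : Type*} [Semiring R] (p : R[X]) (m : ℕ) :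
    (taylor X (p.map C)).coeff m = hasseDeriv m p := by
  rw [taylor_coeff, hasseDeriv_map, eval_map, eval₂_C_X]

theorem sum_powersetCard_prod_X_add_C_eq_hasseDeriv {R ι : Type*} [CommSemiring R]
    (s : Finset ι) (x : ι → R) {k : ℕ} (hk : k ≤ s.card) :
    ∑ t ∈ s.powersetCard k, ∏ i ∈ t, (X + C (x i)) =
      hasseDeriv (s.card - k) (∏ i ∈ s, (X + C (x i))) := by
  have taylor_prod : taylor X ((∏ i ∈ s, (X + C (x i))).map C) =
      ∏ i ∈ s, (X + C (X + C (x i)) : R[X][X]) := by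
    simp only [taylor_apply, Polynomial.map_prod, Polynomial.map_add, map_X, map_C, prod_comp,
      add_comp, X_comp, C_comp, C_add, add_assoc]
  rw [← coeff_taylor_X_map_C, taylor_prod, s.prod_X_add_C_coeff _ (Nat.sub_le _ _),
    Nat.sub_sub_self hk]

theorem splits_derivative {p : ℝ[X]} (hp : p.Splits) : (derivative p).Splits := by
  refine splits_iff_card_roots.2 ((card_roots' _).antisymm ?_)
  calc (derivative p).natDegree ≤ p.natDegree - 1 := natDegree_derivative_le p
    _ = p.roots.card - 1 := by rw [hp.natDegree_eq_card_roots]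
    _ ≤ (derivative p).roots.card := Nat.sub_le_of_le_add (card_roots_le_derivative p)

theorem splits_iterate_derivative {p : ℝ[X]} (hp : p.Splits) (m : ℕ) :
    (derivative^[m] p).Splits := by
  induction m with
  | zero => exact hp
  | succ m ih =>
    rw [Function.iterate_succ_apply']
    exact splits_derivative ih

theorem splits_hasseDeriv {p : ℝ[X]} (hp : p.Splits) (m : ℕ) : (hasseDeriv m p).Splits := by
  have factorial_ne_zero : (m.factorial : ℝ) ≠ 0 := mod_cast m.factorial_ne_zero
  have hasseDeriv_eq : hasseDeriv m p = C (m.factorial : ℝ)⁻¹ * derivative^[m] p := by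
    rw [← factorial_smul_hasseDeriv, LinearMap.smul_apply, ← Nat.cast_smul_eq_nsmul ℝ,
      ← smul_eq_C_mul, inv_smul_smul₀ factorial_ne_zero]
  rw [hasseDeriv_eq]
  exact (splits_iterate_derivative hp m).C_mul _

theorem esymmPoly_eq_hasseDeriv {n k : ℕ} (hk : k ≤ n) (x : Fin n → ℝ) :
    esymmPoly n k x = hasseDeriv (n - k) (∏ i, (X + C (x i))) := by
  simpa only [esymmPoly, Finset.card_fin] using
    sum_powersetCard_prod_X_add_C_eq_hasseDeriv Finset.univ x (hk.trans_eq (Finset.card_fin n).symm)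

theorem natDegree_esymmPoly {n k : ℕ} (hk : k ≤ n) (x : Fin n → ℝ) :
    (esymmPoly n k x).natDegree = k := by
  have natDegree_prod : (∏ i, (X + C (x i))).natDegree = n := by
    simp [natDegree_prod_of_monic _ _ fun i _ => monic_X_add_C (x i)]
  rw [esymmPoly_eq_hasseDeriv hk, natDegree_hasseDeriv, natDegree_prod, Nat.sub_sub_self hk]

theorem splits_esymmPoly {n k : ℕ} (hk : k ≤ n) (x : Fin n → ℝ) : (esymmPoly n k x).Splits := by
  rw [esymmPoly_eq_hasseDeriv hk]
  exact splits_hasseDeriv (Splits.prod fun i _ => Splits.X_add_C (x i)) (n - k)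

theorem stmt15 (n k : ℕ) (hn : 1 ≤ n) (hk : k ≤ n) (x : Fin n → ℝ) :
    (esymmPoly n k x).natDegree = k ∧ ((esymmPoly n k x).map (RingHom.id ℝ)).Splits := by
  rw [Polynomial.map_id]
  exact ⟨natDegree_esymmPoly hk x, splits_esymmPoly hk x⟩
end
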